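/- Assume Conditions (C). Then for any sequences 0 < i_n < l_n with l_n = o(n), the weights at positions i_n and l_n of the size-biased random order without replacement satisfy E[w_{v(i_n)}·w_{v(l_n)}] = 1 + o(1) as n → ∞. -/

import Mathlib

open MeasureTheory Filter Asymptotics
open scoped Classical ENNReal Topology

noncomputable section

/-- `ℓ_n`: the total weight. -/
def ell (w : ∀ n : ℕ, Fin n → ℝ) (n : ℕ) : ℝ := ∑ i, w n i

/-- Conditions (C) on the triangular array of weights, relative to the law `μ` of the
limiting random variable `W`. -/
structure CondC (w : ∀ n : ℕ, Fin n → ℝ) (μ : Measure ℝ) : Prop where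
  isProb : IsProbabilityMeasure μ
  pos : ∀ᵐ x ∂μ, 0 < x
  w_pos : ∀ n, ∀ i : Fin n, 0 < w n i
  w_anti : ∀ n, ∀ i j : Fin n, i ≤ j → w n j ≤ w n i
  int3 : Integrable (fun x => x ^ 3) μ
  moment_eq : ∫ x, x ^ 2 ∂μ = ∫ x, x ∂μ
  weak : ∀ g : BoundedContinuousFunction ℝ ℝ,
    Tendsto (fun n : ℕ => (∑ i : Fin n, g (w n i)) / (n : ℝ)) atTop (𝓝 (∫ x, g x ∂μ))
  ell_asymp : (fun n : ℕ => ell w n - (∫ x, x ∂μ) * (n : ℝ)) =o[atTop]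
      fun n : ℕ => (n : ℝ) ^ ((2 : ℝ) / 3)
  sq_asymp : (fun n : ℕ => (∑ i : Fin n, (w n i) ^ 2) - (∫ x, x ^ 2 ∂μ) * (n : ℝ)) =o[atTop]
      fun n : ℕ => (n : ℝ) ^ ((2 : ℝ) / 3)
  cube_asymp : (fun n : ℕ => (∑ i : Fin n, (w n i) ^ 3) - (∫ x, x ^ 3 ∂μ) * (n : ℝ)) =o[atTop]
      fun _ : ℕ => (1 : ℝ)
  max_asymp : (fun n : ℕ => ⨆ i : Fin n, w n i) =o[atTop] fun n : ℕ => (n : ℝ) ^ ((1 : ℝ) / 3)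

/-- The constant `C = E[W³]/E[W]`. -/
def Cconst (μ : Measure ℝ) : ℝ := (∫ x, x ^ 3 ∂μ) / (∫ x, x ∂μ)

/-- The critical percolation parameter `p_f = (ℓ_n^{1/3} + f_n)/ℓ_n^{4/3}`. -/
def pf (w : ∀ n : ℕ, Fin n → ℝ) (f : ℕ → ℝ) (n : ℕ) : ℝ :=
  (ell w n ^ ((1 : ℝ) / 3) + f n) / ell w n ^ ((4 : ℝ) / 3)

/-- A Bernoulli-type measure on `Bool` with parameter `p`. -/
def bern (p : ℝ) : Measure Bool :=
  ENNReal.ofReal (1 - p) • Measure.dirac false + ENNReal.ofReal p • Measure.dirac true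

/-- The law of the independent edge indicators of the rank-1 inhomogeneous random graph
`G(W,p)`: the indicator attached to the (ordered) pair `(i,j)` is Bernoulli with success
probability `1 - exp (- w i * w j * p)`, all independent. -/
def graphMeasure (n : ℕ) (wn : Fin n → ℝ) (p : ℝ) : Measure (Fin n → Fin n → Bool) :=
  Measure.pi fun i => Measure.pi fun j => bern (1 - Real.exp (-(wn i * wn j * p)))

/-- The simple graph built from a sample of edge indicators: `i ~ j` iff `i ≠ j` and the
indicator of the pair `(min i j, max i j)` is `true`. -/
def graphOf {n : ℕ} (ω : Fin n → Fin n → Bool) : SimpleGraph (Fin n) :=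
  SimpleGraph.fromRel fun i j => ω (min i j) (max i j) = true

/-- The size (number of vertices) of a connected component. -/
def csize {n : ℕ} (G : SimpleGraph (Fin n)) (c : G.ConnectedComponent) : ℕ :=
  Nat.card {v : Fin n // G.connectedComponentMk v = c}

/-- The weight of a connected component: sum of the weights of its vertices. -/
def cweight {n : ℕ} (wn : Fin n → ℝ) (G : SimpleGraph (Fin n)) (c : G.ConnectedComponent) : ℝ :=
  ∑ v : Fin n, if G.connectedComponentMk v = c then wn v else 0

/-- The number of edges of a connected component. -/
def cedges {n : ℕ} (G : SimpleGraph (Fin n)) (c : G.ConnectedComponent) : ℕ :=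
  Nat.card {e : Sym2 (Fin n) // e ∈ G.edgeSet ∧ ∀ v ∈ e, G.connectedComponentMk v = c}

/-- The surplus (excess) of a connected component: edges − vertices + 1. -/
def csurplus {n : ℕ} (G : SimpleGraph (Fin n)) (c : G.ConnectedComponent) : ℤ :=
  (cedges G c : ℤ) - (csize G c : ℤ) + 1

/-- `c` is a largest connected component. -/
def isLargest {n : ℕ} (G : SimpleGraph (Fin n)) (c : G.ConnectedComponent) : Prop :=
  ∀ c', csize G c' ≤ csize G c

/-- The finset of connected components of a graph on `Fin n`. -/
def comps {n : ℕ} (G : SimpleGraph (Fin n)) : Finset G.ConnectedComponent :=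
  Finset.univ.image G.connectedComponentMk

/-- The law of the size-biased random order without replacement `(v(1),…,v(n))`, seen as a
measure on functions `Fin n → Fin n` (supported on permutations `σ`, with
`P(v = σ) = ∏_i w (σ i) / (ℓ_n − ∑_{k<i} w (σ k))`). -/
def sbMeasure (n : ℕ) (wn : Fin n → ℝ) : Measure (Fin n → Fin n) :=
  Measure.sum fun σ : Equiv.Perm (Fin n) =>
    ENNReal.ofReal (∏ i : Fin n,
        wn (σ i) / ((∑ k, wn k) - ∑ k ∈ Finset.univ.filter fun k => k < i, wn (σ k))) •
      Measure.dirac ⇑σ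

/-- The joint law of (edge indicators of `G(W,p)`, size-biased order), the two being
independent. -/
def expMeasure' (n : ℕ) (wn : Fin n → ℝ) (p : ℝ) :
    Measure ((Fin n → Fin n → Bool) × (Fin n → Fin n)) :=
  Measure.sum fun σ : Equiv.Perm (Fin n) =>
    ENNReal.ofReal (∏ i : Fin n,
        wn (σ i) / ((∑ k, wn k) - ∑ k ∈ Finset.univ.filter fun k => k < i, wn (σ k))) •
      (graphMeasure n wn p).map fun g => (g, ⇑σ)

/-- `sbW wn vord k` is `w_{v(k)}` (1-based), with the conventions `w_{v(0)} = 0` and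
`w_{v(k)} = 0` for `k > n`. -/
def sbW {n : ℕ} (wn : Fin n → ℝ) (vord : Fin n → Fin n) (k : ℕ) : ℝ :=
  if h : k - 1 < n then (if k = 0 then 0 else wn (vord ⟨k - 1, h⟩)) else 0

/-- The (0-based) first position, in the order `vord`, of a vertex of the component `c`;
this governs the order in which components are discovered by the breadth-first walk. -/
def firstIdx {n : ℕ} (G : SimpleGraph (Fin n)) (vord : Fin n → Fin n)
    (c : G.ConnectedComponent) : ℕ :=
  sInf {i : ℕ | ∃ h : i < n, G.connectedComponentMk (vord ⟨i, h⟩) = c}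

/-- The number of vertices explored strictly before the exploration of the component `c`
starts: components are explored in the order of their first appearance in `vord`, and the
exploration of `c` occupies the steps `startT c + 1, …, startT c + csize c`. -/
def startT {n : ℕ} (G : SimpleGraph (Fin n)) (vord : Fin n → Fin n)
    (c : G.ConnectedComponent) : ℕ :=
  ∑ v : Fin n, if firstIdx G vord (G.connectedComponentMk v) < firstIdx G vord c then 1 else 0

/-- The state (explored vertices, queue of discovered-but-unexplored vertices) of the
breadth-first walk after `i` steps; roots are chosen as the first undiscovered vertex in the
order `vord`, and children are queued in the order `vord`. -/
def bfwQueue {n : ℕ} (G : SimpleGraph (Fin n)) (vord : Fin n → Fin n) :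
    ℕ → Finset (Fin n) × List (Fin n)
  | 0 => (∅, [])
  | i + 1 =>
    let s := bfwQueue G vord i
    let q : List (Fin n) :=
      if s.2.isEmpty then ((List.ofFn vord).filter fun v => decide (v ∉ s.1)).take 1 else s.2
    match q with
    | [] => (s.1, [])
    | v :: rest =>
      (insert v s.1,
        rest ++ (List.ofFn vord).filter fun u => decide (G.Adj v u ∧ u ∉ s.1 ∧ u ∉ q))

/-- The reflected exploration process `L` of the breadth-first walk:
`L_0 = 1`, `L_{i+1} = max (L_i + c(i+1) - 1) 1`. -/
def Lproc {n : ℕ} (G : SimpleGraph (Fin n)) (vord : Fin n → Fin n) (i : ℕ) : ℕ :=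
  max (bfwQueue G vord i).2.length 1

/-- `discNbrs G vord i` is the number of neighbours of `v(i+1)` (0-based: `vord i`) outside
`{v(1),…,v(i+1)}`, i.e. the increment `X⁰_{i+1} + 1` of the process `L⁰`. -/
def discNbrs {n : ℕ} (G : SimpleGraph (Fin n)) (vord : Fin n → Fin n) (i : ℕ) : ℕ :=
  Nat.card {j : Fin n // (∃ h : i < n, G.Adj (vord ⟨i, h⟩) j) ∧
    ∀ k : ℕ, ∀ hk : k < n, k ≤ i → vord ⟨k, hk⟩ ≠ j}

/-- The process `L⁰`: `L⁰_0 = 1`, `L⁰_{i+1} = L⁰_i + X⁰_{i+1}` where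
`X⁰_{i+1} = ∑_{j ∉ {v(1),…,v(i+1)}} Y(v(i+1), j) − 1`. -/
def L0 {n : ℕ} (G : SimpleGraph (Fin n)) (vord : Fin n → Fin n) (m : ℕ) : ℤ :=
  1 - (m : ℤ) + ∑ i ∈ Finset.range m, (discNbrs G vord i : ℤ)

/-- The deterministic-drift process `L̃^h`, defined by
`L̃^h_m + m − 1 = ∑_{i=1}^m ∑_{k > i+h} (1 − exp (−w_{v(i)} w_{v(k)} p))`,
the inner sum being over positions `k ≤ n` in the size-biased order. -/
def Ltilde {n : ℕ} (wn : Fin n → ℝ) (p : ℝ) (vord : Fin n → Fin n) (h m : ℕ) : ℝ :=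
  1 - (m : ℝ) + ∑ i ∈ Finset.range m,
    if hi : i < n then
      ∑ k : Fin n, if i + h < (k : ℕ) then
        1 - Real.exp (-(wn (vord ⟨i, hi⟩) * wn (vord k) * p)) else 0
    else 0

/-- The law of the independent exponential clocks `(T_k)_{k ≤ n}`, `T_k` of rate `w_k / ℓ_n`. -/
def clocksMeasure (n : ℕ) (wn : Fin n → ℝ) : Measure (Fin n → ℝ) :=
  Measure.pi fun k => ProbabilityTheory.expMeasure (wn k / ∑ i, wn i)

/-- `N(x)`: the number of clocks that have rung by time `x`. -/
def Nclock {n : ℕ} (x : ℝ) (ω : Fin n → ℝ) : ℕ :=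
  ∑ k : Fin n, if ω k ≤ x then 1 else 0

/-- `X(x)`: the total weight of the clocks that have rung by time `x`. -/
def Xclock {n : ℕ} (wn : Fin n → ℝ) (x : ℝ) (ω : Fin n → ℝ) : ℝ :=
  ∑ k : Fin n, if ω k ≤ x then wn k else 0

/-- Conditions (C2) on a pair of sequences `(a, b)`, relative to the constant `Ā`. -/
structure Cond2 (w : ∀ n : ℕ, Fin n → ℝ) (Abar : ℝ) (a b : ℕ → ℝ) : Prop where
  exp_lt : ∀ᶠ n : ℕ in atTop,
    Real.exp (-(b n) ^ 2 / (Abar * (b n * (n : ℝ) ^ ((1 : ℝ) / 3) + a n))) < 1 / 4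
  a_top : Tendsto a atTop atTop
  b_top : Tendsto b atTop atTop
  a_lito : a =o[atTop] fun n : ℕ => (n : ℝ)
  b_bigO : b =O[atTop] a
  a_bigO : a =O[atTop] fun n => b n * ell w n ^ ((1 : ℝ) / 3)
  a_sq_bigO : (fun n => a n ^ 2) =O[atTop] fun n => b n * ell w n

/-- Conditions (C3) on a quadruple of sequences `(a, b, c, d)`. -/
structure Cond3 (w : ∀ n : ℕ, Fin n → ℝ) (Abar : ℝ) (a b c d : ℕ → ℝ) : Prop where
  sum_lito : (fun n => a n + c n) =o[atTop] fun n : ℕ => (n : ℝ)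
  diff_top : Tendsto (fun n => a n - b n) atTop atTop
  d_bigO : d =O[atTop] fun n => a n - b n
  c2 : Cond2 w Abar (fun n => Real.sqrt ((a n - b n) * (a n + c n))) d

/-- The list of component sizes, sorted in decreasing order. -/
def sizesList {n : ℕ} (G : SimpleGraph (Fin n)) : List ℕ :=
  (((comps G).val.map fun c => csize G c).sort (· ≤ ·)).reverse

/-- `kthSize G k` is the size of the `(k+1)`-st largest connected component of `G`
(`0` if there is no such component). -/
def kthSize {n : ℕ} (G : SimpleGraph (Fin n)) (k : ℕ) : ℕ := (sizesList G).getD k 0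

end

/-!
Given the first `m` draws, the next one is a size-biased pick among the items left over, so the
conditional mean of its weight is `∑ w² / ∑ w`, both sums running over those items. Two uses of the
Cauchy–Schwarz inequality show that any `o(n)` items carry only `o(n)` of `∑ w` and of `∑ w²` as
long as `∑ w³ = O(n)`. Hence the conditional mean is squeezed, uniformly in the past, between two
deterministic sequences with limit `E[W²] / E[W]`, and conditioning successively on the draws before
position `l` and before position `i` yields two such factors.
-/

section PrefixLaw

variable {ι : Type*} [Fintype ι] [DecidableEq ι] {w : ι → ℝ} {m N : ℕ}

/-- The items that the first `m` draws `f` have left over. -/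
def unpicked (f : Fin m → ι) : Finset ι := (Finset.univ.image f)ᶜ

lemma card_compl_unpicked_le (f : Fin m → ι) : (unpicked f)ᶜ.card ≤ m := by
  simpa [unpicked] using Finset.card_image_le (s := Finset.univ) (f := f)

lemma unpicked_nonempty (f : Fin m → ι) (hm : m < Fintype.card ι) : (unpicked f).Nonempty := by
  rw [← Finset.card_pos]
  have h_card := Finset.card_compl_add_card (unpicked f)
  have h_compl := card_compl_unpicked_le f
  omega

lemma sum_unpicked {f : Fin m → ι} (hf : Function.Injective f) (w : ι → ℝ) :
    ∑ x ∈ unpicked f, w x = ∑ x, w x - ∑ k, w (f k) := by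
  rw [unpicked, eq_sub_iff_add_eq, ← Finset.sum_image (f := w) hf.injOn,
    Finset.sum_compl_add_sum]

/-- The probability that the size-biased random order without replacement of `ι`, with weights
`w`, starts with the draws `f`: each draw picks a left-over item with probability proportional to
its weight. -/
noncomputable def prefixProb (w : ι → ℝ) : ∀ {m : ℕ}, (Fin m → ι) → ℝ
  | 0, _ => 1
  | m + 1, f => prefixProb w (Fin.init f) *
      if f (Fin.last m) ∈ unpicked (Fin.init f) then
        w (f (Fin.last m)) / ∑ x ∈ unpicked (Fin.init f), w x
      else 0

lemma prefixProb_nonneg (hw : ∀ x, 0 ≤ w x) (f : Fin m → ι) : 0 ≤ prefixProb w f := by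
  induction m with
  | zero => exact zero_le_one
  | succ m ih =>
    refine mul_nonneg (ih _) ?_
    split_ifs
    exacts [div_nonneg (hw _) (Finset.sum_nonneg fun x _ => hw x), le_rfl]

lemma injective_iff_init_and_last {f : Fin (m + 1) → ι} :
    Function.Injective f ↔
      Function.Injective (Fin.init f) ∧ f (Fin.last m) ∈ unpicked (Fin.init f) := by
  rw [← Fin.snoc_init_self f, Fin.snoc_injective_iff]
  simp [unpicked]

lemma prefixProb_of_not_injective {f : Fin m → ι} (hf : ¬ Function.Injective f) :
    prefixProb w f = 0 := by
  induction m with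
  | zero => exact absurd (Function.injective_of_subsingleton f) hf
  | succ m ih =>
    rw [injective_iff_init_and_last, not_and_or] at hf
    rcases hf with h_init | h_last
    · rw [prefixProb, ih h_init, zero_mul]
    · rw [prefixProb, if_neg h_last, mul_zero]

lemma prefixProb_of_injective {f : Fin m → ι} (hf : Function.Injective f) :
    prefixProb w f = ∏ k, w (f k) / (∑ x, w x - ∑ j ∈ Finset.Iio k, w (f j)) := by
  induction m with
  | zero => rfl
  | succ m ih =>
    obtain ⟨h_init, h_last⟩ := injective_iff_init_and_last.1 hf
    rw [prefixProb, if_pos h_last, ih h_init, sum_unpicked h_init, Fin.prod_univ_castSucc]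
    simp only [Fin.init, Fin.Iio_castSucc, Fin.Iio_last_eq_map, Finset.sum_map,
      Fin.coe_castSuccEmb]

/-- The expectation of `G` evaluated at the first `m` draws of the size-biased random order. -/
noncomputable def prefixMean (w : ι → ℝ) (G : (Fin m → ι) → ℝ) : ℝ := ∑ f, prefixProb w f * G f

lemma prefixMean_const_mul (c : ℝ) (G : (Fin m → ι) → ℝ) :
    prefixMean w (fun f => c * G f) = c * prefixMean w G := by
  simp only [prefixMean, Finset.mul_sum, mul_left_comm]

lemma prefixMean_mono (hw : ∀ x, 0 ≤ w x) {G H : (Fin m → ι) → ℝ} (hGH : ∀ f, G f ≤ H f) :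
    prefixMean w G ≤ prefixMean w H :=
  Finset.sum_le_sum fun f _ => mul_le_mul_of_nonneg_left (hGH f) (prefixProb_nonneg hw f)

/-- The tower property: the center of mass is the conditional mean of `h` at the next draw. -/
lemma prefixMean_init_mul_last (G : (Fin m → ι) → ℝ) (h : ι → ℝ) :
    prefixMean w (fun f : Fin (m + 1) → ι => G (Fin.init f) * h (f (Fin.last m))) =
      prefixMean w fun f => G f * (unpicked f).centerMass w h := by
  unfold prefixMean
  rw [← (Fin.snocEquiv fun _ => ι).sum_comp, Fintype.sum_prod_type_right]
  refine Finset.sum_congr rfl fun f _ => ?_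
  simp only [Fin.snocEquiv, Equiv.coe_fn_mk, prefixProb, Fin.init_snoc, Fin.snoc_last,
    Finset.centerMass, smul_eq_mul, Finset.mul_sum]
  rw [← Finset.sum_subset (Finset.subset_univ (unpicked f))]
  · refine Finset.sum_congr rfl fun x hx => ?_
    rw [if_pos hx]
    ring
  · intro x _ hx
    rw [if_neg hx]
    ring

lemma prefixMean_take (hw : ∀ x, 0 < w x) (G : (Fin m → ι) → ℝ) (hmN : m ≤ N)
    (hN : N ≤ Fintype.card ι) :
    prefixMean w (fun f : Fin N → ι => G (Fin.take m hmN f)) = prefixMean w G := by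
  induction N, hmN using Nat.le_induction with
  | base => rfl
  | succ N hmN ih =>
    rw [← ih (by omega)]
    have tower := prefixMean_init_mul_last (w := w)
      (fun f : Fin N → ι => G (Fin.take m hmN f)) (fun _ => 1)
    simp only [mul_one] at tower
    refine tower.trans (congrArg (prefixMean w) (funext fun f => ?_))
    have h_mass := Finset.sum_pos (fun x _ => hw x) (unpicked_nonempty f (by omega))
    rw [show (unpicked f).centerMass w (fun _ => (1 : ℝ)) = 1 from
      Finset.centerMass_const h_mass.ne' 1, mul_one]

lemma prefixMean_one (hw : ∀ x, 0 < w x) (hm : m ≤ Fintype.card ι) :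
    prefixMean w (fun _ : Fin m → ι => 1) = 1 := by
  rw [prefixMean_take (m := 0) hw (fun _ => 1) m.zero_le hm]
  simp [prefixMean, prefixProb]

lemma prefixMean_take_mul_apply (hw : ∀ x, 0 < w x) (G : (Fin m → ι) → ℝ) (h : ι → ℝ)
    (hmN : m < N) (hN : N ≤ Fintype.card ι) :
    prefixMean w (fun f : Fin N → ι => G (Fin.take m hmN.le f) * h (f ⟨m, hmN⟩)) =
      prefixMean w fun f => G f * (unpicked f).centerMass w h := by
  rw [← prefixMean_init_mul_last]
  exact prefixMean_take hw
    (fun f : Fin (m + 1) → ι => G (Fin.init f) * h (f (Fin.last m))) hmN hN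

lemma prefixMean_take_mul_apply_mem_Icc (hw : ∀ x, 0 < w x) {G : (Fin m → ι) → ℝ}
    (hG : ∀ f, 0 ≤ G f) {h : ι → ℝ} {c C : ℝ} (hmN : m < N) (hN : N ≤ Fintype.card ι)
    (hcC : ∀ s : Finset ι, sᶜ.card ≤ m → s.centerMass w h ∈ Set.Icc c C) :
    prefixMean w (fun f : Fin N → ι => G (Fin.take m hmN.le f) * h (f ⟨m, hmN⟩)) ∈
      Set.Icc (c * prefixMean w fun f : Fin N → ι => G (Fin.take m hmN.le f))
        (C * prefixMean w fun f : Fin N → ι => G (Fin.take m hmN.le f)) := by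
  rw [prefixMean_take_mul_apply hw G h hmN hN, prefixMean_take hw G hmN.le hN,
    ← prefixMean_const_mul, ← prefixMean_const_mul]
  have hcC' (f : Fin m → ι) := hcC (unpicked f) (card_compl_unpicked_le f)
  constructor <;> refine prefixMean_mono (fun x => (hw x).le) fun f => ?_
  · simpa only [mul_comm c] using mul_le_mul_of_nonneg_left (hcC' f).1 (hG f)
  · simpa only [mul_comm C] using mul_le_mul_of_nonneg_left (hcC' f).2 (hG f)

end PrefixLaw

section SizeBiasedOrder

variable {n : ℕ} {w : Fin n → ℝ} {j k : ℕ} {c C : ℝ}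

lemma integral_sbMeasure (hw : ∀ x, 0 ≤ w x) (F : (Fin n → Fin n) → ℝ) :
    ∫ v, F v ∂sbMeasure n w = prefixMean w F := by
  have h_prob (σ : Equiv.Perm (Fin n)) : prefixProb w σ = ∏ i, w (σ i) /
      (∑ x, w x - ∑ k ∈ Finset.univ.filter fun k => k < i, w (σ k)) := by
    simpa only [Finset.filter_gt_eq_Iio] using prefixProb_of_injective σ.injective
  rw [sbMeasure, Measure.sum_fintype, integral_finsetSum_measure fun σ _ =>
    Integrable.of_finite.smul_measure ENNReal.ofReal_ne_top]
  refine Fintype.sum_of_injective (fun σ : Equiv.Perm (Fin n) => ⇑σ) DFunLike.coe_injective _ _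
    (fun f hf => ?_) (fun σ => ?_)
  · have h_not_inj : ¬ Function.Injective f := fun h =>
      hf ⟨Equiv.ofBijective f (Finite.injective_iff_bijective.1 h), rfl⟩
    rw [prefixProb_of_not_injective h_not_inj, zero_mul]
  · rw [integral_smul_measure, integral_dirac, ← h_prob,
      ENNReal.toReal_ofReal (prefixProb_nonneg hw σ), smul_eq_mul]

lemma sbW_succ (w : Fin n → ℝ) (v : Fin n → Fin n) (hk : k < n) :
    sbW w v (k + 1) = w (v ⟨k, hk⟩) := by
  simp [sbW, hk]

lemma integral_sbW_mem_Icc (hw : ∀ x, 0 < w x) (hk : 0 < k) (hkn : k ≤ n)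
    (hcC : ∀ s : Finset (Fin n), sᶜ.card < k → s.centerMass w w ∈ Set.Icc c C) :
    ∫ v, sbW w v k ∂sbMeasure n w ∈ Set.Icc c C := by
  obtain ⟨k, rfl⟩ := Nat.exists_eq_add_one.2 hk
  have hkn' : n ≤ Fintype.card (Fin n) := (Fintype.card_fin n).ge
  have h_mem := prefixMean_take_mul_apply_mem_Icc hw (G := fun _ : Fin k → Fin n => 1)
    (fun _ => zero_le_one) hkn hkn' fun s hs => hcC s (Nat.lt_succ_of_le hs)
  rw [integral_sbMeasure fun x => (hw x).le]
  simpa only [sbW_succ w _ hkn, one_mul, prefixMean_one hw hkn', mul_one] using h_mem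

lemma integral_sbW_mul_sbW_mem_Icc (hw : ∀ x, 0 < w x) (hj : 0 < j) (hjk : j < k) (hkn : k ≤ n)
    (hcC : ∀ s : Finset (Fin n), sᶜ.card < k → s.centerMass w w ∈ Set.Icc c C) :
    ∫ v, sbW w v j * sbW w v k ∂sbMeasure n w ∈
      Set.Icc (c * ∫ v, sbW w v j ∂sbMeasure n w) (C * ∫ v, sbW w v j ∂sbMeasure n w) := by
  obtain ⟨j, rfl⟩ := Nat.exists_eq_add_one.2 hj
  obtain ⟨k, rfl⟩ := Nat.exists_eq_add_one.2 (hj.trans hjk)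
  have hjk' : j < k := Nat.lt_of_succ_lt_succ hjk
  simp only [integral_sbMeasure fun x => (hw x).le, sbW_succ w _ hkn,
    sbW_succ w _ (hjk'.trans hkn)]
  exact prefixMean_take_mul_apply_mem_Icc hw (G := fun f : Fin k → Fin n => w (f ⟨j, hjk'⟩))
    (fun _ => (hw _).le) hkn (Fintype.card_fin n).ge fun s hs => hcC s (Nat.lt_succ_of_le hs)

end SizeBiasedOrder

section FewItems

lemma centerMass_self_eq_div {ι : Type*} (s : Finset ι) (w : ι → ℝ) :
    s.centerMass w w = (∑ x ∈ s, w x ^ 2) / ∑ x ∈ s, w x := by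
  simp only [Finset.centerMass, smul_eq_mul, sq, div_eq_inv_mul]

variable {ι : Type*} [Fintype ι] {w : ι → ℝ} {s : Finset ι} {k : ℕ}

/-- The Cauchy–Schwarz bound on the total weight of `k` items. -/
noncomputable def sumBound (w : ι → ℝ) (k : ℕ) : ℝ := √(k * ∑ x, w x ^ 2)

/-- The bound on the sum of the squared weights of `k` items that `sumBound` yields by a second
use of Cauchy–Schwarz. -/
noncomputable def sumSqBound (w : ι → ℝ) (k : ℕ) : ℝ := √(sumBound w k * ∑ x, w x ^ 3)

lemma sum_le_sumBound (hs : s.card ≤ k) : ∑ x ∈ s, w x ≤ sumBound w k := by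
  refine Real.le_sqrt_of_sq_le ?_
  calc (∑ x ∈ s, w x) ^ 2 ≤ s.card * ∑ x ∈ s, w x ^ 2 := sq_sum_le_card_mul_sum_sq
    _ ≤ k * ∑ x, w x ^ 2 := by gcongr; exact s.subset_univ

lemma sum_sq_le_sumSqBound (hw : ∀ x, 0 ≤ w x) (hs : s.card ≤ k) :
    ∑ x ∈ s, w x ^ 2 ≤ sumSqBound w k := by
  have hw3 (x : ι) : 0 ≤ w x ^ 3 := pow_nonneg (hw x) 3
  refine Real.le_sqrt_of_sq_le ?_
  calc (∑ x ∈ s, w x ^ 2) ^ 2 ≤ (∑ x ∈ s, w x) * ∑ x ∈ s, w x ^ 3 :=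
        Finset.sum_sq_le_sum_mul_sum_of_sq_le_mul s (fun x _ => hw x) (fun x _ => hw3 x)
          fun x _ => by rw [← pow_mul, ← pow_succ']
    _ ≤ sumBound w k * ∑ x, w x ^ 3 :=
        mul_le_mul (sum_le_sumBound hs)
          (Finset.sum_le_sum_of_subset_of_nonneg s.subset_univ fun x _ _ => hw3 x)
          (Finset.sum_nonneg fun x _ => hw3 x) (Real.sqrt_nonneg _)

lemma centerMass_self_mem_Icc [DecidableEq ι] (hw : ∀ x, 0 ≤ w x) (hs : sᶜ.card ≤ k)
    (hk : sumBound w k < ∑ x, w x) :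
    s.centerMass w w ∈ Set.Icc ((∑ x, w x ^ 2 - sumSqBound w k) / ∑ x, w x)
      ((∑ x, w x ^ 2) / (∑ x, w x - sumBound w k)) := by
  have h_sum := Finset.sum_compl_add_sum s w
  have h_sum_sq := Finset.sum_compl_add_sum s fun x => w x ^ 2
  have h_sum_compl : ∑ x ∈ sᶜ, w x ≤ sumBound w k := sum_le_sumBound hs
  have h_sum_sq_compl : ∑ x ∈ sᶜ, w x ^ 2 ≤ sumSqBound w k := sum_sq_le_sumSqBound hw hs
  have h_compl_nonneg : 0 ≤ ∑ x ∈ sᶜ, w x := Finset.sum_nonneg fun x _ => hw x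
  have h_sq_nonneg (t : Finset ι) : 0 ≤ ∑ x ∈ t, w x ^ 2 :=
    Finset.sum_nonneg fun x _ => sq_nonneg (w x)
  have h_rest : 0 < ∑ x, w x - sumBound w k := sub_pos.2 hk
  rw [centerMass_self_eq_div]
  constructor
  · calc (∑ x, w x ^ 2 - sumSqBound w k) / ∑ x, w x
        ≤ (∑ x ∈ s, w x ^ 2) / ∑ x, w x :=
          div_le_div_of_nonneg_right (by linarith) (by linarith)
      _ ≤ (∑ x ∈ s, w x ^ 2) / ∑ x ∈ s, w x :=
          div_le_div_of_nonneg_left (h_sq_nonneg s) (by linarith) (by linarith)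
  · exact div_le_div₀ (h_sq_nonneg _) (by linarith [h_sq_nonneg sᶜ]) h_rest (by linarith)

end FewItems

section Asymptotics

lemma isLittleO_sqrt_mul {α : Type*} {u : Filter α} {f g h : α → ℝ} (hf : f =o[u] h)
    (hg : g =O[u] h) : (fun x => √(f x * g x)) =o[u] h := by
  have h_sq_le (x : α) : ‖√(f x * g x) ^ 2‖ ≤ ‖f x * g x‖ := by
    rw [Real.sq_sqrt', Real.norm_of_nonneg (le_max_right _ _)]
    exact max_le (le_abs_self _) (abs_nonneg _)
  have h_sq : (fun x => √(f x * g x) ^ 2) =o[u] fun x => h x ^ 2 := by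
    simpa only [sq (h _)] using
      (IsBigO.of_bound' (.of_forall h_sq_le)).trans_isLittleO (hf.mul_isBigO hg)
  exact h_sq.of_pow two_ne_zero

lemma tendsto_div_natCast_of_sub_isLittleO_rpow {a : ℕ → ℝ} {c p : ℝ} (hp : p ≤ 1)
    (ha : (fun n => a n - c * n) =o[atTop] fun n : ℕ => (n : ℝ) ^ p) :
    Tendsto (fun n => a n / n) atTop (𝓝 c) := by
  have h_pow : (fun n : ℕ => (n : ℝ) ^ p) =O[atTop] fun n : ℕ => (n : ℝ) := by
    refine .of_bound' ?_
    filter_upwards [eventually_ge_atTop 1] with n hn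
    rw [Real.norm_of_nonneg (by positivity), Real.norm_natCast]
    exact Real.rpow_le_self_of_one_le (Nat.one_le_cast.2 hn) hp
  have h_sub := (ha.trans_isBigO h_pow).tendsto_div_nhds_zero
  refine tendsto_sub_nhds_zero_iff.1 (h_sub.congr' ?_)
  filter_upwards [eventually_ne_atTop 0] with n hn
  rw [sub_div, mul_div_cancel_right₀ c (Nat.cast_ne_zero.2 hn)]

lemma isBigO_of_tendsto_div_natCast {a : ℕ → ℝ} {c : ℝ}
    (ha : Tendsto (fun n => a n / n) atTop (𝓝 c)) : a =O[atTop] fun n => (n : ℝ) := by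
  refine isBigO_of_div_tendsto_nhds ?_ c ha
  filter_upwards [eventually_ne_atTop 0] with n hn h_zero
  exact absurd h_zero (Nat.cast_ne_zero.2 hn)

lemma tendsto_div_of_tendsto_div_natCast {a b : ℕ → ℝ} {V E : ℝ} (hE : E ≠ 0)
    (ha : Tendsto (fun n => a n / n) atTop (𝓝 V)) (hb : Tendsto (fun n => b n / n) atTop (𝓝 E)) :
    Tendsto (fun n => a n / b n) atTop (𝓝 (V / E)) := by
  refine (ha.div hb hE).congr' ?_
  filter_upwards [eventually_ne_atTop 0] with n hn
  exact div_div_div_cancel_right₀ (Nat.cast_ne_zero.2 hn) _ _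

variable {w : ∀ n : ℕ, Fin n → ℝ} {E V : ℝ}

lemma exists_tendsto_forall_centerMass_mem_Icc (hw : ∀ n x, 0 ≤ w n x) (hE : 0 < E)
    (h_sum : Tendsto (fun n => ell w n / n) atTop (𝓝 E))
    (h_sq : Tendsto (fun n => (∑ x, w n x ^ 2) / n) atTop (𝓝 V))
    (h_cube : (fun n => ∑ x, w n x ^ 3) =O[atTop] fun n => (n : ℝ)) {k : ℕ → ℕ}
    (hk : (fun n => (k n : ℝ)) =o[atTop] fun n => (n : ℝ)) :
    ∃ c C : ℕ → ℝ, Tendsto c atTop (𝓝 (V / E)) ∧ Tendsto C atTop (𝓝 (V / E)) ∧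
      ∀ᶠ n in atTop, ∀ s : Finset (Fin n), sᶜ.card ≤ k n →
        s.centerMass (w n) (w n) ∈ Set.Icc (c n) (C n) := by
  have h_sumBound : (fun n => sumBound (w n) (k n)) =o[atTop] fun n => (n : ℝ) :=
    isLittleO_sqrt_mul hk (isBigO_of_tendsto_div_natCast h_sq)
  have h_sumSqBound : (fun n => sumSqBound (w n) (k n)) =o[atTop] fun n => (n : ℝ) :=
    isLittleO_sqrt_mul h_sumBound h_cube
  have h_rest := h_sum.sub h_sumBound.tendsto_div_nhds_zero
  have h_rest_sq := h_sq.sub h_sumSqBound.tendsto_div_nhds_zero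
  simp only [← sub_div, sub_zero] at h_rest h_rest_sq
  refine ⟨_, _, tendsto_div_of_tendsto_div_natCast hE.ne' h_rest_sq h_sum,
    tendsto_div_of_tendsto_div_natCast hE.ne' h_sq h_rest, ?_⟩
  filter_upwards [h_rest.eventually_const_lt hE, eventually_gt_atTop 0] with n hn h_pos s hs
  have h_lt : sumBound (w n) (k n) < ell w n :=
    sub_pos.1 ((div_pos_iff_of_pos_right (Nat.cast_pos.2 h_pos)).1 hn)
  exact centerMass_self_mem_Icc (hw n) hs h_lt

theorem mean_product_size_biased_weights_general (hw : ∀ n x, 0 < w n x) (hE : 0 < E)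
    (h_sum : Tendsto (fun n => ell w n / n) atTop (𝓝 E))
    (h_sq : Tendsto (fun n => (∑ x, w n x ^ 2) / n) atTop (𝓝 V))
    (h_cube : (fun n => ∑ x, w n x ^ 3) =O[atTop] fun n => (n : ℝ))
    {i l : ℕ → ℕ} (hi : ∀ n, 0 < i n) (hil : ∀ n, i n < l n)
    (hl : (fun n => (l n : ℝ)) =o[atTop] fun n => (n : ℝ)) :
    Tendsto (fun n => ∫ v, sbW (w n) v (i n) * sbW (w n) v (l n) ∂sbMeasure n (w n)) atTop
      (𝓝 ((V / E) ^ 2)) := by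
  obtain ⟨c, C, hc, hC, h_mem⟩ :=
    exists_tendsto_forall_centerMass_mem_Icc (fun n x => (hw n x).le) hE h_sum h_sq h_cube hl
  have hln : ∀ᶠ n in atTop, l n ≤ n := by
    filter_upwards [hl.bound one_pos] with n hn
    simpa using hn
  have h_first : Tendsto (fun n => ∫ v, sbW (w n) v (i n) ∂sbMeasure n (w n)) atTop
      (𝓝 (V / E)) := by
    have h_bounds := h_mem.and hln |>.mono fun n ⟨hs, hn⟩ => integral_sbW_mem_Icc (hw n) (hi n)
      ((hil n).le.trans hn) fun s h => hs s (h.trans (hil n)).le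
    exact tendsto_of_tendsto_of_tendsto_of_le_of_le' hc hC (h_bounds.mono fun _ => And.left)
      (h_bounds.mono fun _ => And.right)
  have h_pair_bounds := h_mem.and hln |>.mono fun n ⟨hs, hn⟩ =>
    integral_sbW_mul_sbW_mem_Icc (hw n) (hi n) (hil n) hn fun s h => hs s h.le
  rw [sq]
  exact tendsto_of_tendsto_of_tendsto_of_le_of_le' (hc.mul h_first) (hC.mul h_first)
    (h_pair_bounds.mono fun _ => And.left) (h_pair_bounds.mono fun _ => And.right)

end Asymptotics

section CondC

variable {w : ∀ n : ℕ, Fin n → ℝ} {μ : Measure ℝ}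

lemma CondC.integral_id_pos (hC : CondC w μ) : 0 < ∫ x, x ∂μ := by
  have := hC.isProb
  have h_int : Integrable (fun x : ℝ => x) μ := by
    refine ((integrable_const 1).add hC.int3).mono' measurable_id.aestronglyMeasurable ?_
    filter_upwards [hC.pos] with x hx
    rw [Real.norm_of_nonneg hx.le]
    simp only [Pi.add_apply]
    nlinarith [mul_nonneg (add_pos one_pos hx).le (sq_nonneg (x - 1))]
  have h_nonneg : 0 ≤ᵐ[μ] fun x => x := hC.pos.mono fun x hx => hx.le
  refine (integral_nonneg_of_ae h_nonneg).lt_of_ne' fun h_zero => ?_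
  obtain ⟨x, hx_pos, hx_zero⟩ :=
    (hC.pos.and ((integral_eq_zero_iff_of_nonneg_ae h_nonneg h_int).1 h_zero)).exists
  exact hx_pos.ne' hx_zero

lemma CondC.tendsto_ell_div (hC : CondC w μ) :
    Tendsto (fun n => ell w n / n) atTop (𝓝 (∫ x, x ∂μ)) :=
  tendsto_div_natCast_of_sub_isLittleO_rpow (by norm_num) hC.ell_asymp

lemma CondC.tendsto_sum_sq_div (hC : CondC w μ) :
    Tendsto (fun n => (∑ x, w n x ^ 2) / n) atTop (𝓝 (∫ x, x ∂μ)) :=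
  tendsto_div_natCast_of_sub_isLittleO_rpow (by norm_num) (hC.moment_eq ▸ hC.sq_asymp)

lemma CondC.sum_cube_isBigO (hC : CondC w μ) :
    (fun n => ∑ x, w n x ^ 3) =O[atTop] fun n => (n : ℝ) :=
  isBigO_of_tendsto_div_natCast <| tendsto_div_natCast_of_sub_isLittleO_rpow zero_le_one <| by
    simpa only [Real.rpow_zero] using hC.cube_asymp

end CondC

/-- Lemma of the paper: `E[w_{v(i)} w_{v(l)}] = 1 + o(1)` for
`0 < i < l = o(n)`. -/
theorem mean_product_size_biased_weights
    (w : ∀ n : ℕ, Fin n → ℝ) (μ : Measure ℝ) (hC : CondC w μ)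
    (i l : ℕ → ℕ) (hi0 : ∀ n, 0 < i n) (hil : ∀ n, i n < l n)
    (hl : (fun n => (l n : ℝ)) =o[atTop] fun n : ℕ => (n : ℝ)) :
    (fun n => (∫ ω, sbW (w n) ω (i n) * sbW (w n) ω (l n) ∂sbMeasure n (w n)) - 1) =o[atTop]
      fun _ : ℕ => (1 : ℝ) := by
  have h := mean_product_size_biased_weights_general hC.w_pos hC.integral_id_pos
    hC.tendsto_ell_div hC.tendsto_sum_sq_div hC.sum_cube_isBigO hi0 hil hl
  simpa [isLittleO_one_iff, div_self hC.integral_id_pos.ne'] using h.sub_const 1
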